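/- The generating polynomial ^ℓB_n(q, Y0, Y1, Z) := sum over w in B_n of q^{ℓ(w)} Y0^{pix^+ w} Y1^{pix^- w} Z^{neg w} satisfies ^ℓB_n(q,Y0,Y1,Z) = sum over i+j+k+l = n of the q-multinomial (n choose i,j,k,l)_q * q^{binom(j+k+1, 2)} * Y0^i * (Y1 Z)^j * (Z q^i)^k * D_{k+l}(q), where D_m(q) is the generating polynomial for derangements of order m by the major index. -/

import Mathlib

open Finset

attribute [local instance] Classical.propDecidable

noncomputable section

/-- The word `x_1 x_2 ... x_n` (0-indexed) of a signed permutation of order `n`,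
encoded as a pair (permutation, signs): `x_i = ±(σ(i)+1)`. -/
def sword (n : ℕ) (w : Equiv.Perm (Fin n) × (Fin n → Bool)) : ℕ → ℤ :=
  fun i => if h : i < n then
      (if w.2 ⟨i, h⟩ then -(((w.1 ⟨i, h⟩ : ℕ) : ℤ) + 1) else (((w.1 ⟨i, h⟩ : ℕ) : ℤ) + 1))
    else 0

/-- number of negative letters -/
def negStat (n : ℕ) (x : ℕ → ℤ) : ℕ := ((Finset.range n).filter (fun i => x i < 0)).card

/-- number of positive fixed points (`x_i = i`, 1-indexed) -/
def fixPlus (n : ℕ) (x : ℕ → ℤ) : ℕ :=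
  ((Finset.range n).filter (fun i => x i = (i : ℤ) + 1)).card

/-- number of negative fixed points (`x_i = -i`, 1-indexed) -/
def fixMinus (n : ℕ) (x : ℕ → ℤ) : ℕ :=
  ((Finset.range n).filter (fun i => x i = -((i : ℤ) + 1))).card

/-- major index of the word -/
def majStat (n : ℕ) (x : ℕ → ℤ) : ℕ :=
  ∑ i ∈ Finset.range (n - 1), if x (i + 1) < x i then i + 1 else 0

/-- number of inversions of the word -/
def invStat (n : ℕ) (x : ℕ → ℤ) : ℕ :=
  ((Finset.range n ×ˢ Finset.range n).filter (fun p => p.1 < p.2 ∧ x p.2 < x p.1)).card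

/-- length function `ℓ(w) = inv w + ∑_{x_i<0} |x_i|` -/
def lenStat (n : ℕ) (x : ℕ → ℤ) : ℕ :=
  invStat n x + ∑ i ∈ Finset.range n, if x i < 0 then (x i).natAbs else 0

/-- flag-major index `fmaj = 2 maj + neg` -/
def fmajStat (n : ℕ) (x : ℕ → ℤ) : ℕ := 2 * majStat n x + negStat n x

/-- the word `x_0 ... x_{m-1}` has its leftmost trough at position `2k` (1-indexed):
`x_1 > x_2 > ... > x_{2k}` and `x_{2k} < x_{2k+1}` (with `x_{m+1} = ∞`). -/
def IsDesarAt (m k : ℕ) (x : ℕ → ℤ) : Prop :=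
  1 ≤ k ∧ 2 * k ≤ m ∧ (∀ i, i + 1 < 2 * k → x (i + 1) < x i) ∧
    (2 * k = m ∨ x (2 * k - 1) < x (2 * k))

/-- a word of length `m` is a desarrangement (empty word included) -/
def IsDesar (m : ℕ) (x : ℕ → ℤ) : Prop :=
  m = 0 ∨ ∃ k, IsDesarAt m k x

/-- the length of the longest right factor of the word of length `n`
which is a desarrangement -/
def dlen (n : ℕ) (x : ℕ → ℤ) : ℕ :=
  sSup {m | m ≤ n ∧ IsDesar m (fun i => x (n - m + i))}

/-- number of letters of `w^-` in the pixed factorization `w = w^- w^+ w^d` -/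
def pixMinus (n : ℕ) (x : ℕ → ℤ) : ℕ :=
  ((Finset.range (n - dlen n x)).filter (fun i => x i < 0)).card

/-- number of letters of `w^+` in the pixed factorization `w = w^- w^+ w^d` -/
def pixPlus (n : ℕ) (x : ℕ → ℤ) : ℕ :=
  ((Finset.range (n - dlen n x)).filter (fun i => 0 < x i)).card

/-- the number of derangements of an `m`-element set -/
def dnum (m : ℕ) : ℕ :=
  (Finset.univ.filter (fun σ : Equiv.Perm (Fin m) => ∀ i, σ i ≠ i)).card

/-- the word of an ordinary permutation of `{1, ..., m}` -/
def pword (m : ℕ) (σ : Equiv.Perm (Fin m)) : ℕ → ℤ :=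
  fun i => if h : i < m then ((σ ⟨i, h⟩ : ℕ) : ℤ) + 1 else 0

/-- the q-ascending factorial `(q;q)_m` -/
def qq {K : Type*} [CommRing K] (q : K) (m : ℕ) : K :=
  ∏ i ∈ Finset.range m, (1 - q ^ (i + 1))

/-- `D_m(q)`: generating polynomial for derangements of order `m` by major index -/
def Dmaj {K : Type*} [CommRing K] (q : K) (m : ℕ) : K :=
  ∑ σ ∈ Finset.univ.filter (fun σ : Equiv.Perm (Fin m) => ∀ i, σ i ≠ i),
    q ^ majStat m (pword m σ)


/-! ### q-binomial coefficients -/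

def qb {K : Type*} [CommRing K] (q : K) : ℕ → ℕ → K
  | _, 0 => 1
  | 0, _ + 1 => 0
  | n + 1, m + 1 => qb q n m + q ^ (m + 1) * qb q n (m + 1)

section QB
variable {K : Type*} [CommRing K] (q : K)

lemma qb_zero (n : ℕ) : qb q n 0 = 1 := by cases n <;> rfl

lemma qb_succ (n m : ℕ) : qb q (n + 1) (m + 1) = qb q n m + q ^ (m + 1) * qb q n (m + 1) := rfl

lemma qb_gt : ∀ (n m : ℕ), n < m → qb q n m = 0
  | n, 0, h => by omega
  | 0, m + 1, _ => rfl
  | n + 1, m + 1, h => by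
    rw [qb_succ, qb_gt n m (by omega), qb_gt n (m + 1) (by omega)]; simp

lemma qb_self : ∀ n : ℕ, qb q n n = 1
  | 0 => rfl
  | n + 1 => by rw [qb_succ, qb_self n, qb_gt q n (n + 1) (by omega)]; simp

lemma qb_succ' : ∀ (n m : ℕ), m ≤ n →
    qb q (n + 1) (m + 1) = q ^ (n - m) * qb q n m + qb q n (m + 1)
  | 0, m, h => by
    obtain rfl : m = 0 := by omega
    simp [qb]
  | n + 1, 0, _ => by
    have h1 := qb_succ' n 0 (by omega)
    have h2 := qb_succ q n 0
    rw [qb_succ, qb_zero]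
    simp only [qb_zero, Nat.sub_zero, zero_add, pow_one, mul_one] at *
    rw [pow_succ']
    linear_combination q * h1 - h2
  | n + 1, m + 1, h => by
    rcases Nat.lt_or_ge m n with h' | h'
    · have h1 := qb_succ' n m (by omega)
      have h2 := qb_succ' n (m + 1) (by omega)
      rw [qb_succ q (n+1) (m+1)]
      have h3 := qb_succ q n m
      have h4 := qb_succ q n (m + 1)
      obtain ⟨d, rfl⟩ : ∃ d, n = m + 1 + d := ⟨n - (m + 1), by omega⟩
      have e1 : m + 1 + d + 1 - (m + 1) = d + 1 := by omega
      have e2 : m + 1 + d - m = d + 1 := by omega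
      have e3 : m + 1 + d - (m + 1) = d := by omega
      rw [e1]; rw [e2] at h1; rw [e3] at h2
      linear_combination h1 + q ^ (m + 2) * h2 - q ^ (d + 1) * h3 - h4
    · obtain rfl : m = n := by omega
      rw [qb_self, qb_self, qb_gt q _ _ (by omega)]; simp

lemma qb_symm : ∀ (s a b : ℕ), a + b = s → qb q s a = qb q s b
  | 0, a, b, h => by
    obtain rfl : a = 0 := by omega
    obtain rfl : b = 0 := by omega
    rfl
  | s + 1, 0, b, h => by
    obtain rfl : b = s + 1 := by omega
    rw [qb_zero, qb_self]
  | s + 1, a + 1, 0, h => by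
    obtain rfl : a = s := by omega
    rw [qb_zero, qb_self]
  | s + 1, a + 1, b + 1, h => by
    rw [qb_succ, qb_succ' q s b (by omega), qb_symm s a (b + 1) (by omega),
      qb_symm s (a + 1) b (by omega)]
    have : s - b = a + 1 := by omega
    rw [this]; ring

lemma qq_succ (n : ℕ) : qq q (n + 1) = qq q n * (1 - q ^ (n + 1)) := by
  simp [qq, Finset.prod_range_succ]

lemma qb_qq : ∀ (s a b : ℕ), a + b = s → qb q s a * (qq q a * qq q b) = qq q s
  | 0, a, b, h => by
    obtain rfl : a = 0 := by omega
    obtain rfl : b = 0 := by omega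
    simp [qb, qq]
  | s + 1, 0, b, h => by
    obtain rfl : b = s + 1 := by omega
    rw [qb_zero]; simp [qq]
  | s + 1, a + 1, 0, h => by
    obtain rfl : a = s := by omega
    rw [qb_self]; simp [qq]
  | s + 1, a + 1, b + 1, h => by
    have h1 := qb_qq s a (b + 1) (by omega)
    have h2 := qb_qq s (a + 1) b (by omega)
    rw [qb_succ]
    rw [qq_succ] at h1 h2
    rw [qq_succ, qq_succ, qq_succ]
    obtain rfl : s = a + b + 1 := by omega
    have e : q ^ (a + b + 1 + 1) = q ^ (a + 1) * q ^ (b + 1) := by ring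
    rw [e]
    linear_combination (1 - q ^ (a+1)) * h1 + q ^ (a+1) * (1 - q ^ (b+1)) * h2

/-- q-factorial -/
def qfact (n : ℕ) : K := ∏ k ∈ range n, ∑ i ∈ range (k + 1), q ^ i

/-- a sum against q-binomials, one Pascal step. -/
lemma sum_qb_succ (n : ℕ) (g : ℕ → K) :
    ∑ j ∈ range (n + 1 + 1), qb q (n + 1) j * g j
      = ∑ j ∈ range (n + 1), qb q n j * (g j + q ^ (n - j) * g (j + 1)) := by
  rw [Finset.sum_range_succ']
  have : ∀ j ∈ range (n + 1), qb q (n + 1) (j + 1) * g (j + 1)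
      = qb q n j * (q ^ (n - j) * g (j + 1)) + qb q n (j + 1) * g (j + 1) := by
    intro j hj
    rw [qb_succ' q n j (by simp at hj; omega)]; ring
  rw [Finset.sum_congr rfl this, Finset.sum_add_distrib, add_assoc, qb_zero]
  have h2 : ∑ j ∈ range (n + 1), qb q n (j + 1) * g (j + 1) + 1 * g 0
      = ∑ j ∈ range (n + 1), qb q n j * g j := by
    have := Finset.sum_range_succ' (fun j => qb q n j * g j) (n + 1)
    rw [qb_zero] at this
    rw [← this, Finset.sum_range_succ, qb_gt q n (n + 1) (by omega)]; simp
  rw [h2, ← Finset.sum_add_distrib]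
  exact Finset.sum_congr rfl fun j _ => by ring

end QB

/-! ### the shuffle lemma -/

section Shuffle
variable {K : Type*} [CommRing K] (q : K)

/-- the word having the letters of `u` in the positions `C` and `0` elsewhere -/
def shw (u : ℕ → ℤ) (C : Finset ℕ) : ℕ → ℤ :=
  fun i => if i ∈ C then u (C.filter (· < i)).card else 0

lemma majStat_succ (n : ℕ) (x : ℕ → ℤ) :
    majStat (n + 2) x = majStat (n + 1) x + if x (n + 1) < x n then n + 1 else 0 := by
  simp [majStat, Finset.sum_range_succ]

lemma majStat_congr (n : ℕ) (x y : ℕ → ℤ)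
    (h : ∀ i, i + 1 < n → (x (i + 1) < x i ↔ y (i + 1) < y i)) : majStat n x = majStat n y := by
  unfold majStat
  refine Finset.sum_congr rfl fun i hi => ?_
  simp only [Finset.mem_range] at hi
  simp only [h i (by omega)]

lemma majStat_congr' (n : ℕ) (x y : ℕ → ℤ)
    (h : ∀ i, i < n → x i = y i) : majStat n x = majStat n y :=
  majStat_congr n x y fun i hi => by rw [h i (by omega), h (i + 1) hi]

lemma shw_insert_lt (u : ℕ → ℤ) (C : Finset ℕ) (n i : ℕ) (hi : i < n) :
    shw u (insert n C) i = shw u C i := by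
  unfold shw
  have : (insert n C).filter (· < i) = C.filter (· < i) := by
    ext j; simp only [Finset.mem_filter, Finset.mem_insert]; constructor
    · rintro ⟨rfl | h, h2⟩
      · omega
      · exact ⟨h, h2⟩
    · rintro ⟨h, h2⟩; exact ⟨Or.inr h, h2⟩
  rw [this]
  have e : i ∈ insert n C ↔ i ∈ C := by simp; omega
  simp only [e]

lemma shw_insert_self (u : ℕ → ℤ) (C : Finset ℕ) (n : ℕ) (hC : C ⊆ range n) :
    shw u (insert n C) n = u C.card := by
  unfold shw
  have : (insert n C).filter (· < n) = C := by
    ext j; simp only [Finset.mem_filter, Finset.mem_insert]; constructor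
    · rintro ⟨rfl | h, h2⟩
      · omega
      · exact h
    · intro h; exact ⟨Or.inr h, by simpa using hC h⟩
  rw [this]; simp

lemma shw_notin (u : ℕ → ℤ) (C : Finset ℕ) (n : ℕ) (hC : n ∉ C) : shw u C n = 0 := by
  simp [shw, hC]

def S1 (u : ℕ → ℤ) (n m : ℕ) : K :=
  ∑ C ∈ powersetCard m (range n), q ^ majStat (n + 1) (shw u (insert n C))
def S0 (u : ℕ → ℤ) (n m : ℕ) : K :=
  ∑ C ∈ powersetCard m (range n), q ^ majStat (n + 1) (shw u C)

lemma sum_psc (n m : ℕ) (f : Finset ℕ → K) :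
    ∑ C ∈ powersetCard (m + 1) (range (n + 1)), f C
      = ∑ C ∈ powersetCard (m + 1) (range n), f C
        + ∑ C ∈ powersetCard m (range n), f (insert n C) := by
  rw [Finset.range_add_one, Finset.powersetCard_succ_insert (by simp), Finset.sum_union, 
    Finset.sum_image]
  · intro C hC D hD h
    simp only [Finset.mem_coe, Finset.mem_powersetCard] at hC hD
    have hC' : n ∉ C := fun h => by simpa using hC.1 h
    have hD' : n ∉ D := fun h => by simpa using hD.1 h
    rw [← Finset.erase_insert hC', h, Finset.erase_insert hD']
  · rw [Finset.disjoint_left]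
    intro C hC hC'
    simp only [Finset.mem_image, Finset.mem_powersetCard] at hC hC'
    obtain ⟨D, _, rfl⟩ := hC'
    have := hC.1 (Finset.mem_insert_self n D)
    simp at this

lemma notin_of_psc {n m : ℕ} {C : Finset ℕ} (h : C ∈ powersetCard m (range n)) (i : ℕ)
    (hi : n ≤ i) : i ∉ C := fun h' => by
  have := (Finset.mem_powersetCard.1 h).1 h'
  simp at this; omega

lemma S0_zero (u : ℕ → ℤ) (n : ℕ) : S0 q u n 0 = 1 := by
  simp [S0, majStat, shw]

lemma S0_rec (u : ℕ → ℤ) (n m : ℕ) :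
    S0 q u (n + 1) (m + 1)
      = S0 q u n (m + 1) + q ^ (if 0 < u m then n + 1 else 0) * S1 q u n m := by
  unfold S0 S1
  rw [sum_psc, Finset.mul_sum]
  congr 1
  · refine Finset.sum_congr rfl fun C hC => ?_
    rw [majStat_succ, shw_notin _ _ _ (notin_of_psc hC n le_rfl),
      shw_notin _ _ _ (notin_of_psc hC (n + 1) (by omega))]
    simp
  · refine Finset.sum_congr rfl fun C hC => ?_
    have h1 : n + 1 ∉ insert n C := by
      have := notin_of_psc hC (n + 1) (by omega)
      simp [this]
    rw [majStat_succ, shw_notin _ _ _ h1, shw_insert_self _ _ _ (Finset.mem_powersetCard.1 hC).1,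
      (Finset.mem_powersetCard.1 hC).2, pow_add, mul_comm]

lemma S1_rec (u : ℕ → ℤ) (n m : ℕ) :
    S1 q u (n + 1) (m + 1)
      = q ^ (if u (m + 1) < 0 then n + 1 else 0) * S0 q u n (m + 1)
        + q ^ (if u (m + 1) < u m then n + 1 else 0) * S1 q u n m := by
  unfold S0 S1
  rw [sum_psc, Finset.mul_sum, Finset.mul_sum]
  congr 1
  · refine Finset.sum_congr rfl fun C hC => ?_
    have hs : C ⊆ range (n + 1) := (Finset.mem_powersetCard.1 hC).1.trans (by simp)
    rw [majStat_succ, shw_insert_self _ _ _ hs, shw_insert_lt _ _ _ _ (by omega),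
      shw_notin _ _ _ (notin_of_psc hC n le_rfl), (Finset.mem_powersetCard.1 hC).2,
      pow_add, mul_comm, majStat_congr' (n + 1) _ (shw u C)
        fun i hi => shw_insert_lt _ _ _ _ hi]
  · refine Finset.sum_congr rfl fun C hC => ?_
    have hs : insert n C ⊆ range (n + 1) := by
      rw [Finset.range_add_one]
      exact Finset.insert_subset_insert _ (Finset.mem_powersetCard.1 hC).1
    have hc : (insert n C).card = m + 1 := by
      rw [Finset.card_insert_of_notMem (notin_of_psc hC n le_rfl),
        (Finset.mem_powersetCard.1 hC).2]
    rw [majStat_succ, shw_insert_self _ _ _ hs, shw_insert_lt _ _ _ _ (by omega),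
      shw_insert_self _ _ _ (Finset.mem_powersetCard.1 hC).1,
      (Finset.mem_powersetCard.1 hC).2, hc,
      pow_add, mul_comm, majStat_congr' (n + 1) _ (shw u (insert n C))
        fun i hi => shw_insert_lt _ _ _ _ hi]

lemma S1_zero (u : ℕ → ℤ) (n : ℕ) :
    S1 q u (n + 1) 0 = q ^ (if u 0 < 0 then n + 1 else 0) := by
  unfold S1
  rw [Finset.powersetCard_zero, Finset.sum_singleton, majStat_succ,
    shw_insert_self _ _ _ (by simp), shw_insert_lt _ _ _ _ (by omega),
    shw_notin _ _ _ (by simp), majStat_congr' (n + 1) _ (shw u ∅)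
        fun i hi => shw_insert_lt _ _ _ _ hi]
  congr 1
  simp only [majStat, shw]
  by_cases h : u 0 < 0 <;> simp [h]

theorem S_formula (u : ℕ → ℤ) (N : ℕ) (hu : ∀ i, i < N → u i ≠ 0) : ∀ n : ℕ,
    (∀ m, m < N → S1 q u n m
      = q ^ (majStat (m + 1) u + if u m < 0 then n - m else 0) * qb q n m) ∧
    (∀ m, m < N → S0 q u n (m + 1)
      = q ^ (majStat (m + 1) u + if u m < 0 then 0 else m + 1) * qb q n (m + 1))
  | 0 => by
    constructor
    · intro m _
      cases m with
      | zero => simp [S1, majStat, qb]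
      | succ m => rw [S1, Finset.powersetCard_eq_empty.2 (by simp)]; simp [qb]
    · intro m _
      rw [S0, Finset.powersetCard_eq_empty.2 (by simp)]; simp [qb]
  | n + 1 => by
    obtain ⟨h1, h0⟩ := S_formula u N hu n
    constructor
    · intro m hm
      cases m with
      | zero => rw [S1_zero, qb_zero]; simp [majStat]
      | succ m =>
        rw [S1_rec, h0 m (by omega), h1 m (by omega), majStat_succ]
        have a1 := hu m (by omega)
        have a2 := hu (m + 1) (by omega)
        rcases Nat.lt_or_ge n m with hnm | hnm
        · rw [qb_gt q n _ (by omega), qb_gt q n _ (by omega), qb_gt q _ _ (by omega)]; simp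
        obtain ⟨d, rfl⟩ : ∃ d, n = m + d := ⟨n - m, by omega⟩
        have e1 := qb_succ q (m + d) m
        have e2 := qb_succ' q (m + d) m hnm
        have e3 : m + d + 1 - (m + 1) = d := by omega
        have e4 : m + d - m = d := by omega
        rw [e4] at e2
        rw [e3, e4]
        generalize majStat (m + 1) u = M at *
        generalize qb q (m + d + 1) (m + 1) = A at *
        by_cases c : u (m + 1) < u m
        · rcases lt_or_gt_of_ne a1 with b1 | b1 <;> rcases lt_or_gt_of_ne a2 with b2 | b2
          · simp only [b1, b2, c, if_true]
            rw [e2]; ring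
          · omega
          · simp only [not_lt_of_gt b1, b2, c, if_true, if_false]
            rw [e1]; ring
          · simp only [not_lt_of_gt b1, not_lt_of_gt b2, c, if_true, if_false]
            rw [e2]; ring
        · rcases lt_or_gt_of_ne a1 with b1 | b1 <;> rcases lt_or_gt_of_ne a2 with b2 | b2
          · simp only [b1, b2, c, if_true, if_false]
            rw [e1]; ring
          · simp only [b1, not_lt_of_gt b2, c, if_true, if_false]
            rw [e2]; ring
          · omega
          · simp only [not_lt_of_gt b1, not_lt_of_gt b2, c, if_false]
            rw [e1]; ring
    · intro m hm
      rw [S0_rec, h0 m hm, h1 m hm]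
      have a1 := hu m (by omega)
      rcases Nat.lt_or_ge n m with hnm | hnm
      · rw [qb_gt q n _ (by omega), qb_gt q n _ (by omega), qb_gt q _ _ (by omega)]; simp
      obtain ⟨d, rfl⟩ : ∃ d, n = m + d := ⟨n - m, by omega⟩
      have e1 := qb_succ q (m + d) m
      have e2 := qb_succ' q (m + d) m hnm
      have e4 : m + d - m = d := by omega
      rw [e4] at e2
      rw [e4]
      rcases lt_or_gt_of_ne a1 with b1 | b1
      · simp only [b1, not_lt_of_gt b1, if_true, if_false]
        rw [e2]; ring
      · simp only [b1, not_lt_of_gt b1, if_true, if_false]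
        rw [e2]; ring

theorem shuffle_sum (u : ℕ → ℤ) (n m : ℕ) (hu : ∀ i, i < m → u i ≠ 0) :
    ∑ C ∈ powersetCard m (range n), q ^ majStat n (shw u C) = q ^ majStat m u * qb q n m := by
  cases m with
  | zero => simp [majStat, shw, qb_zero]
  | succ m =>
    cases n with
    | zero => rw [Finset.powersetCard_eq_empty.2 (by simp)]; simp [qb]
    | succ n =>
      obtain ⟨h1, h0⟩ := S_formula q u (m + 1) hu n
      have h1 := h1 m (by omega)
      have h0 := h0 m (by omega)
      rw [sum_psc]
      change S0 q u n (m + 1) + S1 q u n m = _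
      rw [h0, h1]
      rcases Nat.lt_or_ge n m with hnm | hnm
      · rw [qb_gt q n _ (by omega), qb_gt q n _ (by omega), qb_gt q _ _ (by omega)]; simp
      split_ifs
      · rw [qb_succ' q n m hnm]; ring
      · rw [qb_succ]; ring

end Shuffle

/-! ### derangement part -/

section Wachs

/-- auxiliary word: subcedants negative, excedants positive -/
def uw (m : ℕ) (α : Equiv.Perm (Fin m)) : ℕ → ℤ :=
  fun i => if h : i < m then
    (if (α ⟨i, h⟩ : ℕ) < i then ((α ⟨i, h⟩ : ℕ) : ℤ) - m else ((α ⟨i, h⟩ : ℕ) : ℤ) + 1) else 0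

lemma uw_ne (m : ℕ) (α : Equiv.Perm (Fin m)) (i : ℕ) (h : i < m) : uw m α i ≠ 0 := by
  unfold uw
  rw [dif_pos h]
  have := (α ⟨i, h⟩).2
  split_ifs <;> omega

lemma uw_neg (m : ℕ) (α : Equiv.Perm (Fin m)) (i : Fin m) : uw m α i < 0 ↔ α i < i := by
  unfold uw
  rw [dif_pos i.2]
  have := (α i).2
  rw [Fin.lt_def]
  simp only [Fin.eta]
  split_ifs <;> omega

lemma uw_lt (m : ℕ) (α : Equiv.Perm (Fin m)) (hα : ∀ i, α i ≠ i) (i j : Fin m)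
    (hij : (j : ℕ) = i + 1) : uw m α j < uw m α i ↔ α j < α i := by
  unfold uw
  rw [dif_pos i.2, dif_pos j.2]
  have h1 := (α i).2
  have h2 := (α j).2
  have h3 := hα i
  have h4 := hα j
  have h5 : α i ≠ α j := fun h => by have := α.injective h; rw [this] at hij; omega
  rw [ne_eq, Fin.ext_iff] at h3 h4 h5
  rw [Fin.lt_def]
  simp only [Fin.eta]
  split_ifs <;> omega

lemma maj_uw (m : ℕ) (α : Equiv.Perm (Fin m)) (hα : ∀ i, α i ≠ i) :
    majStat m (pword m α) = majStat m (uw m α) := by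
  apply majStat_congr
  intro i hi
  have := uw_lt m α hα ⟨i, by omega⟩ ⟨i + 1, hi⟩ rfl
  simp only at this
  rw [this, Fin.lt_def]
  unfold pword
  rw [dif_pos hi, dif_pos (show i < m by omega)]
  omega

variable {n m : ℕ} (C : Finset (Fin n)) (hC : C.card = m) (α : Equiv.Perm (Fin m))

/-- permutation with moved set `C` -/
def xtd (C : Finset (Fin n)) (hC : C.card = m) (α : Equiv.Perm (Fin m)) : Equiv.Perm (Fin n) :=
  α.extendDomain (p := fun x => x ∈ C) (C.orderIsoOfFin hC).toEquiv

lemma ext_emb (a : Fin m) : xtd C hC α (C.orderEmbOfFin hC a) = C.orderEmbOfFin hC (α a) := by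
  have := Equiv.Perm.extendDomain_apply_image α (p := fun x => x ∈ C) (C.orderIsoOfFin hC).toEquiv a
  simpa [xtd] using this

lemma ext_not (i : Fin n) (hi : i ∉ C) : xtd C hC α i = i :=
  Equiv.Perm.extendDomain_apply_not_subtype α (p := fun x => x ∈ C) _ hi

lemma ex_emb (i : Fin n) (hi : i ∈ C) : ∃ a, C.orderEmbOfFin hC a = i := by
  have : i ∈ Set.range (C.orderEmbOfFin hC) := by
    rw [Finset.range_orderEmbOfFin]; exact hi
  exact this

lemma shw_emb (u : ℕ → ℤ) (a : Fin m) :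
    shw u (C.map Fin.valEmbedding) (C.orderEmbOfFin hC a) = u a := by
  unfold shw
  have h1 : (C.orderEmbOfFin hC a : ℕ) ∈ C.map Fin.valEmbedding := by
    simp only [Finset.mem_map, Fin.valEmbedding_apply]
    exact ⟨_, Finset.orderEmbOfFin_mem C hC a, rfl⟩
  rw [if_pos h1]
  have h2 : (C.map Fin.valEmbedding).filter (· < (C.orderEmbOfFin hC a : ℕ))
      = (Finset.univ.filter (· < a)).map ((C.orderEmbOfFin hC).toEmbedding.trans Fin.valEmbedding) := by
    ext x
    simp only [Finset.mem_filter, Finset.mem_map, Fin.valEmbedding_apply, Finset.mem_univ, true_and,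
      Function.Embedding.trans_apply]
    constructor
    · rintro ⟨⟨y, hy, rfl⟩, hx⟩
      obtain ⟨b, rfl⟩ := ex_emb C hC y hy
      refine ⟨b, ?_, rfl⟩
      exact (C.orderEmbOfFin hC).lt_iff_lt.1 hx
    · rintro ⟨b, hb, rfl⟩
      exact ⟨⟨_, Finset.orderEmbOfFin_mem C hC b, rfl⟩, (C.orderEmbOfFin hC).lt_iff_lt.2 hb⟩
  rw [h2, Finset.card_map]
  congr 1
  rw [show (Finset.univ.filter (· < a)) = Finset.Iio a by ext; simp, Fin.card_Iio]

lemma shw_not (u : ℕ → ℤ) (i : Fin n) (hi : i ∉ C) :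
    shw u (C.map Fin.valEmbedding) i = 0 := by
  apply shw_notin
  simp only [Finset.mem_map, Fin.valEmbedding_apply, not_exists, not_and]
  intro x hx h
  exact hi (by rwa [← Fin.ext h])

lemma maj_ext (hα : ∀ i, α i ≠ i) :
    majStat n (pword n (xtd C hC α)) = majStat n (shw (uw m α) (C.map Fin.valEmbedding)) := by
  apply majStat_congr
  intro i hi
  unfold pword
  rw [dif_pos hi, dif_pos (show i < n by omega)]
  set x : Fin n := ⟨i, by omega⟩ with hx
  set y : Fin n := ⟨i + 1, hi⟩ with hy
  have hxv : (x : ℕ) = i := rfl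
  have hyv : (y : ℕ) = i + 1 := rfl
  rw [← hxv] at hyv
  rw [← hxv, ← hyv]
  have key : ((((xtd C hC α) y : ℕ) : ℤ) + 1 < (((xtd C hC α) x : ℕ) : ℤ) + 1) ↔
      xtd C hC α y < xtd C hC α x := by
    rw [Fin.lt_def]; omega
  rw [key]
  by_cases cx : x ∈ C <;> by_cases cy : y ∈ C
  · obtain ⟨a, ha⟩ := ex_emb C hC x cx
    obtain ⟨b, hb⟩ := ex_emb C hC y cy
    rw [← ha, ← hb, ext_emb, ext_emb, shw_emb, shw_emb, (C.orderEmbOfFin hC).lt_iff_lt,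
      uw_lt m α hα a b]
    have hab : a < b := by
      rw [← (C.orderEmbOfFin hC).lt_iff_lt, ha, hb, Fin.lt_def]; omega
    by_contra hne
    have h1 : (a : ℕ) + 1 < b := by
      have : (a : ℕ) < b := hab
      omega
    have h2 : a < ⟨a + 1, by omega⟩ := by rw [Fin.lt_def]; simp
    have h3 : (⟨a + 1, by omega⟩ : Fin m) < b := by rw [Fin.lt_def]; simpa using h1
    have h2' := (C.orderEmbOfFin hC).lt_iff_lt.2 h2
    have h3' := (C.orderEmbOfFin hC).lt_iff_lt.2 h3
    rw [ha, Fin.lt_def] at h2'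
    rw [hb, Fin.lt_def] at h3'
    omega
  · obtain ⟨a, ha⟩ := ex_emb C hC x cx
    rw [shw_not C _ y cy, ext_not C hC α y cy, ← ha, ext_emb, shw_emb]
    have h1 := uw_ne m α a a.2
    have h2 := uw_neg m α a
    have h3 : (0 < uw m α a) ↔ ¬ (uw m α a < 0) := by omega
    rw [h3, h2, ← (C.orderEmbOfFin hC).lt_iff_lt, ha]
    have h4 : C.orderEmbOfFin hC (α a) ≠ x := by
      rw [← ha]; exact fun h => hα a ((C.orderEmbOfFin hC).injective h)
    have h5 : C.orderEmbOfFin hC (α a) ≠ y := by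
      intro h; rw [← h] at cy; exact cy (Finset.orderEmbOfFin_mem C hC _)
    rw [ne_eq, Fin.ext_iff] at h4 h5
    rw [Fin.lt_def, Fin.lt_def]
    omega
  · obtain ⟨b, hb⟩ := ex_emb C hC y cy
    rw [shw_not C _ x cx, ext_not C hC α x cx, ← hb, ext_emb, shw_emb, uw_neg,
      ← (C.orderEmbOfFin hC).lt_iff_lt, hb]
    have h4 : C.orderEmbOfFin hC (α b) ≠ y := by
      rw [← hb]; exact fun h => hα b ((C.orderEmbOfFin hC).injective h)
    have h5 : C.orderEmbOfFin hC (α b) ≠ x := by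
      intro h; rw [← h] at cx; exact cx (Finset.orderEmbOfFin_mem C hC _)
    rw [ne_eq, Fin.ext_iff] at h4 h5
    rw [Fin.lt_def, Fin.lt_def]
    omega
  · rw [shw_not C _ x cx, shw_not C _ y cy, ext_not C hC α x cx, ext_not C hC α y cy, Fin.lt_def]
    omega

variable {K : Type*} [CommRing K] (q : K)

lemma sum_supp (f : Equiv.Perm (Fin n) → K) :
    ∑ σ ∈ Finset.univ.filter (fun σ : Equiv.Perm (Fin n) => Finset.univ.filter (fun i => σ i ≠ i) = C), f σ
      = ∑ α ∈ Finset.univ.filter (fun α : Equiv.Perm (Fin m) => ∀ i, α i ≠ i), f (xtd C hC α) := by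
  symm
  refine Finset.sum_bij (fun α _ => xtd C hC α) ?_ ?_ ?_ ?_
  · intro α hα
    simp only [Finset.mem_filter, Finset.mem_univ, true_and] at hα ⊢
    ext i
    simp only [Finset.mem_filter, Finset.mem_univ, true_and]
    constructor
    · intro h
      by_contra h'
      exact h (ext_not C hC α i h')
    · intro h
      obtain ⟨a, rfl⟩ := ex_emb C hC i h
      rw [ext_emb]
      exact fun h => hα a ((C.orderEmbOfFin hC).injective h)
  · intro α _ β _ h
    ext a
    have := congrArg (fun σ => σ (C.orderEmbOfFin hC a)) h
    simp only [ext_emb] at this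
    rw [(C.orderEmbOfFin hC).injective this]
  · intro σ hσ
    simp only [Finset.mem_filter, Finset.mem_univ, true_and] at hσ
    have hm : ∀ i, i ∈ C ↔ σ i ≠ i := by intro i; rw [← hσ]; simp
    have hex : ∀ a : Fin m, ∃ b, C.orderEmbOfFin hC b = σ (C.orderEmbOfFin hC a) := by
      intro a
      apply ex_emb
      rw [hm]
      intro h
      have := (hm _).1 (Finset.orderEmbOfFin_mem C hC a)
      exact this (σ.injective h)
    choose g hg using hex
    have gi : Function.Injective g := by
      intro a b h
      have h1 := hg a
      rw [h, hg b] at h1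
      exact ((C.orderEmbOfFin hC).injective (σ.injective h1)).symm
    have gb : Function.Bijective g := Finite.injective_iff_bijective.1 gi
    have hval : ∀ i, xtd C hC (Equiv.ofBijective g gb) i = σ i := by
      intro i
      by_cases hi : i ∈ C
      · obtain ⟨a, rfl⟩ := ex_emb C hC i hi
        rw [ext_emb, ← hg]; rfl
      · rw [ext_not C hC _ i hi]
        by_contra h
        exact hi ((hm i).2 (Ne.symm h))
    refine ⟨Equiv.ofBijective g gb, ?_, Equiv.ext hval⟩
    simp only [Finset.mem_filter, Finset.mem_univ, true_and]
    intro a h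
    have h1 := hval (C.orderEmbOfFin hC a)
    rw [ext_emb, h] at h1
    exact (hm _).1 (Finset.orderEmbOfFin_mem C hC a) h1.symm
  · intros; rfl

lemma sum_psc_fin (n m : ℕ) (f : Finset ℕ → K) :
    ∑ C ∈ powersetCard m (Finset.univ : Finset (Fin n)), f (C.map Fin.valEmbedding)
      = ∑ C ∈ powersetCard m (range n), f C := by
  have : range n = (Finset.univ : Finset (Fin n)).map Fin.valEmbedding := by
    ext i; simp only [Finset.mem_range, Finset.mem_map, Finset.mem_univ, true_and,
      Fin.valEmbedding_apply]
    exact ⟨fun h => ⟨⟨i, h⟩, rfl⟩, fun ⟨j, hj⟩ => hj ▸ j.2⟩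
  rw [this, Finset.powersetCard_map, Finset.sum_map]
  rfl

theorem wachs (n : ℕ) : ∑ σ : Equiv.Perm (Fin n), q ^ majStat n (pword n σ)
    = ∑ m ∈ range (n + 1), qb q n m * Dmaj q m := by
  rw [← Finset.sum_fiberwise (s := Finset.univ)
    (g := fun σ : Equiv.Perm (Fin n) => Finset.univ.filter (fun i => σ i ≠ i))]
  rw [← Finset.powerset_univ, Finset.sum_powerset]
  simp only [Finset.card_univ, Fintype.card_fin]
  refine Finset.sum_congr rfl fun m _ => ?_
  have : ∀ C ∈ powersetCard m (Finset.univ : Finset (Fin n)),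
      ∑ σ ∈ Finset.univ.filter (fun σ : Equiv.Perm (Fin n) =>
        Finset.univ.filter (fun i => σ i ≠ i) = C), q ^ majStat n (pword n σ)
      = ∑ α ∈ Finset.univ.filter (fun α : Equiv.Perm (Fin m) => ∀ i, α i ≠ i),
        q ^ majStat n (shw (uw m α) (C.map Fin.valEmbedding)) := by
    intro C hC
    have hC' := (Finset.mem_powersetCard.1 hC).2
    rw [sum_supp C hC']
    refine Finset.sum_congr rfl fun α hα => ?_
    rw [maj_ext C hC' α (by simpa using hα)]
  rw [Finset.sum_congr rfl this, Finset.sum_comm, Dmaj, Finset.mul_sum]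
  refine Finset.sum_congr rfl fun α hα => ?_
  rw [sum_psc_fin n m (fun D => q ^ majStat n (shw (uw m α) D)), shuffle_sum q _ _ _ (uw_ne m α),
    maj_uw m α (by simpa using hα), mul_comm]

end Wachs

/-! ### words on a finite alphabet -/

section Words
variable {K : Type*} [CommRing K] (q : K)

def words (X : Finset ℤ) : Finset (List ℤ) := ⟨X.val.lists, Multiset.lists_nodup_finset X⟩

lemma mem_words {X : Finset ℤ} {l : List ℤ} : l ∈ words X ↔ l.Nodup ∧ l.toFinset = X := by
  unfold words
  rw [Finset.mem_mk, Multiset.mem_lists_iff]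
  constructor
  · intro h
    have hn : l.Nodup := by
      have := X.nodup
      rw [h] at this
      exact this
    refine ⟨hn, ?_⟩
    ext a
    rw [List.mem_toFinset, ← Finset.mem_val, h]; rfl
  · rintro ⟨h1, rfl⟩
    rw [List.toFinset_val, h1.dedup]; rfl

lemma words_length {X : Finset ℤ} {l : List ℤ} (h : l ∈ words X) : l.length = X.card := by
  rw [mem_words] at h
  rw [← h.2, List.toFinset_card_of_nodup h.1]

lemma words_empty : words ∅ = {[]} := by
  ext l; rw [mem_words]; simp only [List.toFinset_eq_empty_iff, Finset.mem_singleton]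
  exact ⟨fun h => h.2, fun h => by subst h; simp⟩

lemma sum_words (X : Finset ℤ) (hX : X.Nonempty) (F : List ℤ → K) :
    ∑ l ∈ words X, F l = ∑ a ∈ X, ∑ l ∈ words (X.erase a), F (a :: l) := by
  rw [Finset.sum_sigma']
  symm
  refine Finset.sum_bij (fun p _ => p.1 :: p.2) ?_ ?_ ?_ ?_
  · rintro ⟨a, l⟩ h
    simp only [Finset.mem_sigma, mem_words] at h ⊢
    obtain ⟨ha, hl, he⟩ := h
    have : a ∉ l := by rw [← List.mem_toFinset, he]; simp
    refine ⟨List.nodup_cons.2 ⟨this, hl⟩, ?_⟩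
    rw [List.toFinset_cons, he, Finset.insert_erase ha]
  · rintro ⟨a, l⟩ _ ⟨b, l'⟩ _ h
    simp only [List.cons.injEq] at h
    obtain ⟨rfl, rfl⟩ := h
    rfl
  · intro l hl
    rw [mem_words] at hl
    cases l with
    | nil => rw [← hl.2] at hX; simp at hX
    | cons a l =>
      refine ⟨⟨a, l⟩, ?_, rfl⟩
      obtain ⟨h1, h2⟩ := hl
      rw [List.nodup_cons] at h1
      simp only [Finset.mem_sigma, mem_words]
      refine ⟨by rw [← h2]; simp, h1.2, ?_⟩
      rw [← h2, List.toFinset_cons, Finset.erase_insert (by simpa using h1.1)]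
  · intros; rfl

lemma sum_transfer (n : ℕ) (f : Fin n → ℤ) (hf : Function.Injective f) (F : List ℤ → K) :
    ∑ σ : Equiv.Perm (Fin n), F (List.ofFn (fun i => f (σ i)))
      = ∑ l ∈ words (Finset.univ.image f), F l := by
  refine Finset.sum_bij (fun σ _ => List.ofFn (fun i => f (σ i))) ?_ ?_ ?_ ?_
  · intro σ _
    rw [mem_words]
    refine ⟨List.nodup_ofFn.2 (hf.comp σ.injective), ?_⟩
    ext a
    simp only [List.mem_toFinset, List.mem_ofFn, Finset.mem_image, Finset.mem_univ, true_and]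
    constructor
    · rintro ⟨i, hi⟩; exact ⟨σ i, hi⟩
    · rintro ⟨i, hi⟩; exact ⟨σ.symm i, by simpa using hi⟩
  · intro σ _ τ _ h
    have := List.ofFn_injective h
    ext i
    rw [hf (congrFun this i)]
  · intro l hl
    have hlen := words_length hl
    rw [Finset.card_image_of_injective _ hf, Finset.card_univ, Fintype.card_fin] at hlen
    rw [mem_words] at hl
    subst hlen
    have hex : ∀ i : Fin l.length, ∃ j, f j = l.get i := by
      intro i
      have : l.get i ∈ l.toFinset := by simp
      rw [hl.2] at this
      simpa using this
    choose g hg using hex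
    have gi : Function.Injective g := by
      intro a b h
      have h1 := hg a
      rw [h, hg b] at h1
      exact (List.nodup_iff_injective_get.1 hl.1 h1).symm
    refine ⟨Equiv.ofBijective g (Finite.injective_iff_bijective.1 gi), Finset.mem_univ _, ?_⟩
    simp only [Equiv.ofBijective_apply, hg]
    exact List.ofFn_get l
  · intros; rfl

/-! inversions -/

def linv : List ℤ → ℕ
  | [] => 0
  | a :: l => l.countP (fun b => decide (b < a)) + linv l

lemma countP_words {X : Finset ℤ} {l : List ℤ} (hl : l ∈ words X) (p : ℤ → Prop) [DecidablePred p] :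
    l.countP (fun b => decide (p b)) = (X.filter p).card := by
  rw [mem_words] at hl
  rw [← hl.2, List.countP_eq_length_filter]
  rw [← List.toFinset_card_of_nodup (hl.1.filter _), List.toFinset_filter]
  simp

lemma sum_rank (X : Finset ℤ) (f : ℕ → K) :
    ∑ a ∈ X, f (X.filter (· < a)).card = ∑ i ∈ range X.card, f i := by
  induction X using Finset.induction_on_max with
  | empty => simp
  | insert M s hM ih =>
    have hn : M ∉ s := fun h => lt_irrefl _ (hM M h)
    rw [Finset.sum_insert hn, Finset.card_insert_of_notMem hn, Finset.sum_range_succ, ← ih, add_comm]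
    congr 1
    · refine Finset.sum_congr rfl fun a ha => ?_
      rw [Finset.filter_insert, if_neg (not_lt_of_gt (hM a ha))]
    · rw [Finset.filter_insert, if_neg (lt_irrefl M), Finset.filter_true_of_mem hM]

theorem sum_inv : ∀ (n : ℕ) (X : Finset ℤ), X.card = n → ∑ l ∈ words X, q ^ linv l = qfact q n
  | 0, X, h => by
    rw [Finset.card_eq_zero] at h; subst h
    rw [words_empty]; simp [linv, qfact]
  | n + 1, X, h => by
    rw [sum_words X (by rw [← Finset.card_pos]; omega)]
    have : ∀ a ∈ X, ∑ l ∈ words (X.erase a), q ^ linv (a :: l)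
        = q ^ (X.filter (· < a)).card * qfact q n := by
      intro a ha
      rw [← sum_inv n (X.erase a) (by rw [Finset.card_erase_of_mem ha]; omega), Finset.mul_sum]
      refine Finset.sum_congr rfl fun l hl => ?_
      rw [linv, pow_add, countP_words hl]
      congr 3
      ext b; simp only [Finset.mem_filter, Finset.mem_erase]
      constructor
      · rintro ⟨⟨_, h⟩, h'⟩; exact ⟨h, h'⟩
      · rintro ⟨h, h'⟩; exact ⟨⟨by omega, h⟩, h'⟩
    rw [Finset.sum_congr rfl this, ← Finset.sum_mul, sum_rank X (fun i => q ^ i), h, mul_comm]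
    simp [qfact, Finset.prod_range_succ]

/-! major index, reading words backwards -/

def rmaj : List ℤ → ℕ
  | [] => 0
  | [_] => 0
  | b :: a :: l => (if b < a then l.length + 1 else 0) + rmaj (a :: l)

theorem sum_rmaj_last : ∀ (n : ℕ) (X : Finset ℤ), X.card = n + 1 → ∀ b ∈ X,
    ∑ l ∈ words (X.erase b), q ^ rmaj (b :: l) = q ^ (n - (X.filter (· < b)).card) * qfact q n
  | 0, X, h, b, hb => by
    have : X.erase b = ∅ := by
      rw [← Finset.card_eq_zero, Finset.card_erase_of_mem hb]; omega
    rw [this, words_empty]; simp [rmaj, qfact]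
  | n + 1, X, h, b, hb => by
    have hc : (X.erase b).card = n + 1 := by rw [Finset.card_erase_of_mem hb]; omega
    rw [sum_words (X.erase b) (by rw [← Finset.card_pos]; omega)]
    set r := (X.filter (· < b)).card with hr
    have hrb : r = ((X.erase b).filter (· < b)).card := by
      rw [hr]; congr 1
      ext x; simp only [Finset.mem_filter, Finset.mem_erase]
      constructor
      · rintro ⟨h, h'⟩; exact ⟨⟨by omega, h⟩, h'⟩
      · rintro ⟨⟨_, h⟩, h'⟩; exact ⟨h, h'⟩
    have hrle : r ≤ n + 1 := by
      rw [hrb, ← hc]; exact Finset.card_filter_le _ _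
    have key : ∀ a ∈ X.erase b, ∑ l ∈ words ((X.erase b).erase a), q ^ rmaj (b :: a :: l)
        = (fun i => q ^ ((if r ≤ i then n + 1 else 0) + (n - i)))
            ((X.erase b).filter (· < a)).card * qfact q n := by
      intro a ha
      have ih := sum_rmaj_last n (X.erase b) hc a ha
      simp only
      rw [pow_add, mul_assoc, ← ih, Finset.mul_sum]
      refine Finset.sum_congr rfl fun l hl => ?_
      have hlen := words_length hl
      rw [Finset.card_erase_of_mem ha, hc] at hlen
      rw [rmaj, pow_add, hlen]
      have hab : a ≠ b := (Finset.mem_erase.1 ha).1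
      have e : r ≤ ((X.erase b).filter (· < a)).card ↔ b < a := by
        constructor
        · intro hle
          by_contra hba
          have hlt : a < b := by omega
          have : ((X.erase b).filter (· < a)).card < r := by
            rw [hrb]
            apply Finset.card_lt_card
            rw [Finset.ssubset_iff_of_subset]
            · exact ⟨a, by simp only [Finset.mem_filter]; exact ⟨ha, hlt⟩, by simp⟩
            · intro x; simp only [Finset.mem_filter]
              rintro ⟨h1, h2⟩; exact ⟨h1, by omega⟩
          omega
        · intro hba
          rw [hrb]
          apply Finset.card_le_card
          intro x; simp only [Finset.mem_filter]
          rintro ⟨h1, h2⟩; exact ⟨h1, by omega⟩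
      by_cases c : b < a
      · rw [if_pos c, if_pos (e.2 c)]; simp
      · rw [if_neg c, if_neg (fun h => c (e.1 h))]
    rw [Finset.sum_congr rfl key, ← Finset.sum_mul,
      sum_rank (X.erase b) (fun i => q ^ ((if r ≤ i then n + 1 else 0) + (n - i))), hc]
    have : ∑ i ∈ range (n + 1), q ^ ((if r ≤ i then n + 1 else 0) + (n - i))
        = q ^ (n + 1 - r) * ∑ i ∈ range (n + 1), q ^ i := by
      obtain ⟨d, hd⟩ : ∃ d, n + 1 = r + d := ⟨n + 1 - r, by omega⟩
      have e : n + 1 - r = d := by omega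
      rw [e, hd, Finset.mul_sum, Finset.sum_range_add, Finset.sum_range_add,
        ← Finset.sum_range_reflect _ r, ← Finset.sum_range_reflect _ d]
      congr 1
      · refine Finset.sum_congr rfl fun i hi => ?_
        simp only [Finset.mem_range] at hi
        rw [if_neg (by omega), ← pow_add]
        congr 1; omega
      · refine Finset.sum_congr rfl fun i hi => ?_
        simp only [Finset.mem_range] at hi
        rw [if_pos (by omega), ← pow_add]
        congr 1; omega
    rw [this, mul_assoc, mul_comm (∑ i ∈ range (n + 1), q ^ i)]
    simp [qfact, Finset.prod_range_succ]

theorem sum_rmaj (n : ℕ) (X : Finset ℤ) (h : X.card = n) :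
    ∑ l ∈ words X, q ^ rmaj l = qfact q n := by
  cases n with
  | zero =>
    rw [Finset.card_eq_zero] at h; subst h
    rw [words_empty]; simp [rmaj, qfact]
  | succ n =>
    rw [sum_words X (by rw [← Finset.card_pos]; omega),
      Finset.sum_congr rfl (sum_rmaj_last q n X h), ← Finset.sum_mul,
      sum_rank X (fun i => q ^ (n - i)), h, ← Finset.sum_range_reflect, mul_comm, qfact, qfact,
      Finset.prod_range_succ]
    congr 1
    refine Finset.sum_congr rfl fun i hi => ?_
    congr 1
    simp at hi; omega

lemma rmaj_ofFn (x : ℕ → ℤ) : ∀ n : ℕ, rmaj ((List.range n).map x).reverse = majStat n x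
  | 0 => by simp [rmaj, majStat]
  | 1 => by simp [rmaj, majStat]
  | n + 2 => by
    have := rmaj_ofFn x (n + 1)
    rw [majStat_succ, ← this]
    simp only [List.range_succ, List.map_append, List.map_cons, List.map_nil, List.reverse_append,
      List.reverse_cons, List.reverse_nil, List.nil_append, List.cons_append, rmaj, List.length_reverse,
      List.length_map, List.length_range]
    rw [add_comm]

theorem macmahon (n : ℕ) : ∑ σ : Equiv.Perm (Fin n), q ^ majStat n (pword n σ) = qfact q n := by
  let f : Fin n → ℤ := fun i => ((i : ℕ) : ℤ) + 1
  have hf : Function.Injective f := by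
    intro a b h; simp only [f] at h; ext; omega
  rw [← sum_rmaj q n (Finset.univ.image f) (by rw [Finset.card_image_of_injective _ hf]; simp),
    ← sum_transfer n f hf]
  rw [← Equiv.sum_comp (Equiv.mulRight (Fin.revPerm : Equiv.Perm (Fin n)))]
  refine Finset.sum_congr rfl fun σ _ => ?_
  rw [← rmaj_ofFn]
  congr 2
  apply List.ext_getElem
  · simp
  · intro i h1 h2
    simp at h1 h2
    simp [pword, f]
    have : n - 1 - i < n := by omega
    simp [this, Fin.rev]
    congr 4
    omega

end Words

/-! ### pixed factorization -/

section Pix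
variable {K : Type*} [CommRing K] (q : K)

/-- position of the leftmost trough -/
def tr : List ℤ → ℕ
  | [] => 0
  | [_] => 1
  | a :: b :: l => if b < a then tr (b :: l) + 1 else 1

def pix : List ℤ → ℕ
  | [] => 0
  | a :: l => if Even (tr (a :: l)) then 0 else pix l + 1

lemma pix_even : ∀ l : List ℤ, Even (tr (l.drop (pix l)))
  | [] => by simp [tr, pix]
  | a :: l => by
    rw [pix]
    split_ifs with h
    · simpa using h
    · simpa using pix_even l

lemma pix_le : ∀ l : List ℤ, pix l ≤ l.length
  | [] => by simp [pix]
  | a :: l => by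
    rw [pix]
    have := pix_le l
    split_ifs with h <;> simp [this]

lemma pix_min : ∀ (l : List ℤ) (p : ℕ), p < pix l → ¬ Even (tr (l.drop p))
  | [], p, h => by simp [pix] at h
  | a :: l, p, h => by
    rw [pix] at h
    split_ifs at h with h'
    · omega
    · cases p with
      | zero => simpa using h'
      | succ p => simpa using pix_min l p (by omega)

lemma pix_sorted : ∀ l : List ℤ, l.Nodup → List.IsChain (· < ·) (l.take (pix l))
  | [], _ => by simp
  | [a], _ => by simp [pix, tr]
  | a :: b :: l, h => by
    have ih := pix_sorted (b :: l) (List.nodup_cons.1 h).2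
    rw [pix]
    split_ifs with h1
    · simp
    · rw [List.take_succ_cons]
      rw [pix] at ih ⊢
      split_ifs at ih ⊢ with h2
      · simp
      · rw [List.take_succ_cons] at ih ⊢
        rw [List.isChain_cons_cons]
        refine ⟨?_, ih⟩
        rw [tr] at h1
        have hab : a ≠ b := by
          rintro rfl; simp at h
        by_contra hlt
        rw [if_pos (by omega), Nat.even_add_one] at h1
        exact h1 h2

lemma pix_append : ∀ (s v : List ℤ), List.IsChain (· < ·) s → Even (tr v) →
    pix (s ++ v) = s.length
  | [], v, _, hv => by
    cases v with
    | nil => simp [pix]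
    | cons a v => simp [pix, hv]
  | [a], v, _, hv => by
    have := pix_append [] v (by simp) hv
    simp only [List.nil_append, List.length_nil] at this
    simp only [List.cons_append, List.nil_append, pix, this]
    rw [if_neg]
    · simp
    · cases v with
      | nil => simp [tr]
      | cons b v =>
        rw [tr]
        split_ifs
        · rw [Nat.even_add_one]; simpa using hv
        · simp
  | a :: b :: s, v, hs, hv => by
    rw [List.isChain_cons_cons] at hs
    have := pix_append (b :: s) v hs.2 hv
    simp only [List.cons_append] at this ⊢
    rw [pix, this, if_neg]
    · simp
    · rw [tr, if_neg (by omega)]; simp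

lemma linv_append : ∀ (s v : List ℤ), List.Pairwise (· < ·) s →
    linv (s ++ v) = (s.map fun a => v.countP (fun b => decide (b < a))).sum + linv v
  | [], v, _ => by simp
  | a :: s, v, h => by
    rw [List.pairwise_cons] at h
    rw [List.cons_append, linv, linv_append s v h.2, List.countP_append, List.map_cons, List.sum_cons]
    have : s.countP (fun b => decide (b < a)) = 0 := by
      rw [List.countP_eq_zero]
      intro b hb
      have := h.1 b hb
      simp; omega
    rw [this]; ring

def cross (L M : Finset ℤ) : ℕ := ∑ a ∈ L, (M.filter (· < a)).card

def dwords (X : Finset ℤ) : Finset (List ℤ) := (words X).filter (fun l => Even (tr l))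

lemma toFinset_drop {l : List ℤ} (hl : l.Nodup) (p : ℕ) :
    (l.drop p).toFinset = l.toFinset \ (l.take p).toFinset := by
  conv_rhs => rw [← List.take_append_drop p l]
  conv at hl => rw [← List.take_append_drop p l]
  rw [List.nodup_append] at hl
  ext x
  simp only [List.mem_toFinset, Finset.mem_sdiff, List.mem_append,
    List.take_append_drop]
  constructor
  · intro h
    exact ⟨by have := List.mem_of_mem_drop h; exact this, fun h' => hl.2.2 x h' x h rfl⟩
  · rintro ⟨h1, h2⟩
    rw [← List.take_append_drop p l, List.mem_append] at h1
    tauto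

lemma words_factor {X : Finset ℤ} {l : List ℤ} (hl : l ∈ words X) :
    (l.take (pix l)).toFinset ⊆ X ∧
      l.drop (pix l) ∈ dwords (X \ (l.take (pix l)).toFinset) := by
  rw [mem_words] at hl
  obtain ⟨h1, rfl⟩ := hl
  constructor
  · intro x; simp only [List.mem_toFinset]; exact List.mem_of_mem_take
  · unfold dwords
    rw [Finset.mem_filter, mem_words]
    exact ⟨⟨h1.sublist (List.drop_sublist _ _), toFinset_drop h1 _⟩, pix_even l⟩

lemma linv_factor {X : Finset ℤ} {l : List ℤ} (hl : l ∈ words X) :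
    linv l = cross (l.take (pix l)).toFinset (X \ (l.take (pix l)).toFinset)
      + linv (l.drop (pix l)) := by
  have h1 := (mem_words.1 hl).1
  have h2 := (words_factor hl).2
  unfold dwords at h2
  rw [Finset.mem_filter] at h2
  conv_lhs => rw [← List.take_append_drop (pix l) l]
  rw [linv_append _ _ (List.isChain_iff_pairwise.1 (pix_sorted l h1)), cross,
    List.sum_toFinset _ (h1.sublist (List.take_sublist _ _))]
  congr 3
  funext a
  exact countP_words h2.1 _

theorem sum_factor (X : Finset ℤ) (F : Finset ℤ → List ℤ → K) :
    ∑ l ∈ words X, F (l.take (pix l)).toFinset (l.drop (pix l))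
      = ∑ L ∈ X.powerset, ∑ v ∈ dwords (X \ L), F L v := by
  rw [Finset.sum_sigma']
  refine Finset.sum_bij (fun l _ => ⟨(l.take (pix l)).toFinset, l.drop (pix l)⟩) ?_ ?_ ?_ ?_
  · intro l hl
    simp only [Finset.mem_sigma, Finset.mem_powerset]
    exact words_factor hl
  · intro l hl l' hl' h
    simp only [Sigma.mk.injEq, heq_eq_eq] at h
    have n1 := (mem_words.1 hl).1
    have n2 := (mem_words.1 hl').1
    rw [← List.take_append_drop (pix l) l, ← List.take_append_drop (pix l') l', h.2]
    congr 1
    have s1 := List.isChain_iff_pairwise.1 (pix_sorted l n1)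
    have s2 := List.isChain_iff_pairwise.1 (pix_sorted l' n2)
    have hp := (List.toFinset_eq_iff_perm_dedup.1 h.1)
    rw [(n1.sublist (List.take_sublist _ _)).dedup, (n2.sublist (List.take_sublist _ _)).dedup] at hp
    exact hp.eq_of_pairwise (fun a b _ _ h1 h2 => absurd h1 (not_lt_of_gt h2)) s1 s2
  · rintro ⟨L, v⟩ h
    simp only [Finset.mem_sigma, Finset.mem_powerset, dwords, Finset.mem_filter, mem_words] at h
    obtain ⟨hL, ⟨hv, hvX⟩, he⟩ := h
    have hs : List.IsChain (· < ·) (L.sort) := (Finset.sortedLT_sort L).isChain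
    have hpx := pix_append _ v hs he
    refine ⟨L.sort ++ v, ?_, ?_⟩
    · rw [mem_words, List.nodup_append]
      refine ⟨⟨Finset.sort_nodup _ _, hv, ?_⟩, ?_⟩
      · rintro a ha b hb rfl
        rw [Finset.mem_sort] at ha
        rw [← List.mem_toFinset, hvX] at hb
        simp at hb; tauto
      · rw [List.toFinset_append, hvX, Finset.sort_toFinset, Finset.union_sdiff_of_subset hL]
    · rw [hpx]; simp
  · intros; rfl

theorem sum_cross (X : Finset ℤ) : ∀ g : ℕ → K,
    ∑ L ∈ X.powerset, q ^ cross L (X \ L) * g L.card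
      = ∑ j ∈ range (X.card + 1), qb q X.card j * g j := by
  induction X using Finset.induction_on_max with
  | empty => intro g; simp [cross, qb]
  | insert M s hM ih =>
    intro g
    have hn : M ∉ s := fun h => lt_irrefl _ (hM M h)
    rw [Finset.sum_powerset_insert hn, Finset.card_insert_of_notMem hn, sum_qb_succ,
      ← ih (fun j => g j + q ^ (s.card - j) * g (j + 1)), ← Finset.sum_add_distrib]
    refine Finset.sum_congr rfl fun L hL => ?_
    rw [Finset.mem_powerset] at hL
    have hML : M ∉ L := fun h => hn (hL h)
    have e1 : cross L (insert M s \ L) = cross L (s \ L) := by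
      unfold cross
      refine Finset.sum_congr rfl fun a ha => ?_
      rw [Finset.insert_sdiff_of_notMem _ hML, Finset.filter_insert,
        if_neg (not_lt_of_gt (hM a (hL ha)))]
    have e2 : cross (insert M L) (insert M s \ insert M L) = cross L (s \ L) + (s.card - L.card) := by
      have : insert M s \ insert M L = s \ L := by
        ext x; simp only [Finset.mem_sdiff, Finset.mem_insert]
        constructor
        · rintro ⟨h1, h2⟩; tauto
        · rintro ⟨h1, h2⟩
          refine ⟨Or.inr h1, ?_⟩
          rintro (rfl | h)
          · exact hn h1
          · exact h2 h
      rw [this, cross, Finset.sum_insert hML, Finset.filter_true_of_mem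
        (fun x hx => hM x (Finset.mem_sdiff.1 hx).1), Finset.card_sdiff_of_subset hL, add_comm, cross]
    rw [e1, e2, Finset.card_insert_of_notMem hML, pow_add]
    ring

/-- inversions on desarrangements agree with the major index on derangements -/
theorem desar_sum : ∀ (n : ℕ) (X : Finset ℤ), X.card = n → ∑ v ∈ dwords X, q ^ linv v = Dmaj q n := by
  intro n
  induction n using Nat.strong_induction_on with
  | _ n ih =>
  intro X hX
  have h1 := sum_inv q n X hX
  have h2 : ∑ l ∈ words X, q ^ linv l
      = ∑ L ∈ X.powerset, ∑ v ∈ dwords (X \ L), q ^ (cross L (X \ L) + linv v) := by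
    rw [← sum_factor X (fun L v => q ^ (cross L (X \ L) + linv v))]
    exact Finset.sum_congr rfl fun l hl => by rw [linv_factor hl]
  have h3 := wachs q n
  rw [macmahon] at h3
  have h4 := sum_cross q X (fun j => Dmaj q (n - j))
  have h5 : ∑ m ∈ range (n + 1), qb q n m * Dmaj q m
      = ∑ m ∈ range (n + 1), qb q n m * Dmaj q (n - m) := by
    rw [← Finset.sum_range_reflect]
    refine Finset.sum_congr rfl fun m hm => ?_
    simp only [Finset.mem_range] at hm
    rw [qb_symm q n (n + 1 - 1 - m) m (by omega)]
    congr 2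
  rw [hX] at h4
  rw [h1, h3, h5, ← h4] at h2
  have hmem : ∅ ∈ X.powerset := by simp
  rw [← Finset.add_sum_erase _ _ hmem, ← Finset.add_sum_erase _ _ hmem] at h2
  have h6 : ∑ L ∈ X.powerset.erase ∅, q ^ cross L (X \ L) * Dmaj q (n - L.card)
      = ∑ L ∈ X.powerset.erase ∅, ∑ v ∈ dwords (X \ L), q ^ (cross L (X \ L) + linv v) := by
    refine Finset.sum_congr rfl fun L hL => ?_
    simp only [Finset.mem_erase, Finset.mem_powerset] at hL
    have hc : 0 < L.card := Finset.card_pos.2 (Finset.nonempty_iff_ne_empty.2 hL.1)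
    have hle := Finset.card_le_card hL.2
    rw [← ih (n - L.card) (by omega) (X \ L) (by rw [Finset.card_sdiff_of_subset hL.2, hX]),
      Finset.mul_sum]
    exact Finset.sum_congr rfl fun v _ => by rw [pow_add]
  rw [h6] at h2
  have := add_right_cancel h2
  simpa [cross] using this.symm

end Pix

/-! ### the statistic on a fixed alphabet -/

section Inner
variable {K : Type*} [CommRing K] (q Y0 Y1 : K)

lemma sum_powerset_union (U V : Finset ℤ) (h : Disjoint U V) (f : Finset ℤ → K) :
    ∑ L ∈ (U ∪ V).powerset, f L = ∑ A ∈ U.powerset, ∑ B ∈ V.powerset, f (A ∪ B) := by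
  rw [← Finset.sum_product']
  symm
  refine Finset.sum_bij' (fun p _ => p.1 ∪ p.2) (fun L _ => (L ∩ U, L ∩ V)) ?_ ?_ ?_ ?_ ?_
  · rintro ⟨A, B⟩ hp
    simp only [Finset.mem_product, Finset.mem_powerset] at hp ⊢
    exact Finset.union_subset_union hp.1 hp.2
  · intro L hL
    simp only [Finset.mem_product, Finset.mem_powerset]
    exact ⟨Finset.inter_subset_right, Finset.inter_subset_right⟩
  · rintro ⟨A, B⟩ hp
    simp only [Finset.mem_product, Finset.mem_powerset] at hp
    rw [Finset.disjoint_left] at h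
    have h1 := @hp.1
    have h2 := @hp.2
    simp only [Prod.mk.injEq]
    constructor
    · ext x; simp only [Finset.mem_inter, Finset.mem_union]
      have := @h x; have := @h1 x; have := @h2 x; tauto
    · ext x; simp only [Finset.mem_inter, Finset.mem_union]
      have := @h x; have := @h1 x; have := @h2 x; tauto
  · intro L hL
    simp only [Finset.mem_powerset] at hL
    simp only
    rw [← Finset.inter_union_distrib_left, Finset.inter_eq_left.2 hL]
  · intros; rfl

theorem pix_inner_sum (U V : Finset ℤ) (hU : ∀ x ∈ U, x < 0) (hV : ∀ x ∈ V, 0 < x) :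
    ∑ l ∈ words (U ∪ V), q ^ linv l * Y0 ^ ((l.take (pix l)).toFinset.filter (fun a => 0 < a)).card
        * Y1 ^ ((l.take (pix l)).toFinset.filter (fun a => a < 0)).card
      = ∑ j ∈ range (U.card + 1), ∑ i ∈ range (V.card + 1), qb q U.card j * qb q V.card i *
          (q ^ (i * (U.card - j)) * Y1 ^ j * Y0 ^ i * Dmaj q (U.card + V.card - j - i)) := by
  have hUV : Disjoint U V := by
    rw [Finset.disjoint_left]
    intro x h1 h2
    have := hU x h1; have := hV x h2; omega
  have e1 : ∑ l ∈ words (U ∪ V),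
        q ^ linv l * Y0 ^ ((l.take (pix l)).toFinset.filter (fun a => 0 < a)).card
        * Y1 ^ ((l.take (pix l)).toFinset.filter (fun a => a < 0)).card
      = ∑ L ∈ (U ∪ V).powerset, ∑ v ∈ dwords ((U ∪ V) \ L),
        q ^ (cross L ((U ∪ V) \ L) + linv v) * Y0 ^ (L.filter (fun a => 0 < a)).card
          * Y1 ^ (L.filter (fun a => a < 0)).card := by
    rw [← sum_factor (U ∪ V) (fun L v => q ^ (cross L ((U ∪ V) \ L) + linv v)
      * Y0 ^ (L.filter (fun a => 0 < a)).card * Y1 ^ (L.filter (fun a => a < 0)).card)]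
    exact Finset.sum_congr rfl fun l hl => by rw [linv_factor hl]
  rw [e1, sum_powerset_union U V hUV]
  have e2 : ∀ A ∈ U.powerset, ∀ B ∈ V.powerset,
      ∑ v ∈ dwords ((U ∪ V) \ (A ∪ B)),
        q ^ (cross (A ∪ B) ((U ∪ V) \ (A ∪ B)) + linv v) * Y0 ^ ((A ∪ B).filter (fun a => 0 < a)).card
          * Y1 ^ ((A ∪ B).filter (fun a => a < 0)).card
      = q ^ cross A (U \ A) * (q ^ cross B (V \ B) *
          (q ^ (B.card * (U.card - A.card)) * Y1 ^ A.card * Y0 ^ B.card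
            * Dmaj q (U.card + V.card - A.card - B.card))) := by
    intro A hA B hB
    rw [Finset.mem_powerset] at hA hB
    have hAB : Disjoint A B := Finset.disjoint_of_subset_left hA (Finset.disjoint_of_subset_right hB hUV)
    have f1 : (A ∪ B).filter (fun a => 0 < a) = B := by
      ext x; simp only [Finset.mem_filter, Finset.mem_union]
      constructor
      · rintro ⟨h | h, h'⟩
        · have := hU x (hA h); omega
        · exact h
      · intro h; exact ⟨Or.inr h, hV x (hB h)⟩
    have f2 : (A ∪ B).filter (fun a => a < 0) = A := by
      ext x; simp only [Finset.mem_filter, Finset.mem_union]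
      constructor
      · rintro ⟨h | h, h'⟩
        · exact h
        · have := hV x (hB h); omega
      · intro h; exact ⟨Or.inl h, hU x (hA h)⟩
    have f3 : (U ∪ V) \ (A ∪ B) = (U \ A) ∪ (V \ B) := by
      rw [Finset.disjoint_left] at hUV
      ext x; simp only [Finset.mem_sdiff, Finset.mem_union]
      have := @hUV x; have := @hA x; have := @hB x; tauto
    have f4 : Disjoint (U \ A) (V \ B) := Finset.disjoint_of_subset_left Finset.sdiff_subset
      (Finset.disjoint_of_subset_right Finset.sdiff_subset hUV)
    have f5 : ((U \ A) ∪ (V \ B)).card = U.card + V.card - A.card - B.card := by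
      have := Finset.card_le_card hA
      have := Finset.card_le_card hB
      rw [Finset.card_union_of_disjoint f4, Finset.card_sdiff_of_subset hA,
        Finset.card_sdiff_of_subset hB]
      omega
    have f6 : cross (A ∪ B) ((U \ A) ∪ (V \ B))
        = cross A (U \ A) + cross B (V \ B) + B.card * (U.card - A.card) := by
      unfold cross
      rw [Finset.sum_union hAB, add_assoc]
      congr 1
      · refine Finset.sum_congr rfl fun a ha => ?_
        rw [Finset.filter_union, Finset.filter_false_of_mem (s := V \ B), Finset.union_empty]
        intro x hx
        have := hV x (Finset.mem_sdiff.1 hx).1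
        have := hU a (hA ha)
        omega
      · rw [← smul_eq_mul, ← Finset.sum_const, ← Finset.sum_add_distrib]
        refine Finset.sum_congr rfl fun a ha => ?_
        rw [Finset.filter_union, Finset.filter_true_of_mem (s := U \ A),
          Finset.card_union_of_disjoint, Finset.card_sdiff_of_subset hA, add_comm]
        · exact Finset.disjoint_of_subset_right (Finset.filter_subset _ _) f4
        · intro x hx
          have := hU x (Finset.mem_sdiff.1 hx).1
          have := hV a (hB ha)
          omega
    rw [f1, f2, f3, f6, ← desar_sum q _ _ f5]
    simp only [Finset.mul_sum]
    refine Finset.sum_congr rfl fun v _ => ?_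
    rw [pow_add, pow_add, pow_add]; ring
  rw [Finset.sum_congr rfl fun A hA => Finset.sum_congr rfl fun B hB => e2 A hA B hB]
  have e3 : ∀ A ∈ U.powerset, ∑ B ∈ V.powerset, q ^ cross A (U \ A) * (q ^ cross B (V \ B) *
          (q ^ (B.card * (U.card - A.card)) * Y1 ^ A.card * Y0 ^ B.card
            * Dmaj q (U.card + V.card - A.card - B.card)))
      = q ^ cross A (U \ A) * (fun j => ∑ i ∈ range (V.card + 1), qb q V.card i *
          (q ^ (i * (U.card - j)) * Y1 ^ j * Y0 ^ i * Dmaj q (U.card + V.card - j - i))) A.card := by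
    intro A _
    rw [← Finset.mul_sum, sum_cross q V (fun i => q ^ (i * (U.card - A.card)) * Y1 ^ A.card * Y0 ^ i
            * Dmaj q (U.card + V.card - A.card - i))]
  rw [Finset.sum_congr rfl e3, sum_cross q U (fun j => ∑ i ∈ range (V.card + 1), qb q V.card i *
          (q ^ (i * (U.card - j)) * Y1 ^ j * Y0 ^ i * Dmaj q (U.card + V.card - j - i)))]
  refine Finset.sum_congr rfl fun j _ => ?_
  rw [Finset.mul_sum]
  exact Finset.sum_congr rfl fun i _ => by ring

end Inner

/-! ### translating the statistics -/

section Translate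

lemma map_range_succ (n : ℕ) (x : ℕ → ℤ) :
    (List.range (n + 1)).map x = x 0 :: (List.range n).map (fun i => x (i + 1)) := by
  rw [List.range_succ_eq_map]; simp [Function.comp_def]

lemma countP_map_range (n : ℕ) (x : ℕ → ℤ) (p : ℤ → Prop) [DecidablePred p] :
    ((List.range n).map x).countP (fun b => decide (p b))
      = ((Finset.range n).filter (fun i => p (x i))).card := by
  induction n with
  | zero => simp
  | succ n ih =>
    rw [List.range_succ, List.map_append, List.countP_append, ih, Finset.range_add_one,
      Finset.filter_insert]
    by_cases h : p (x n) <;> simp [h]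

lemma invStat_eq (n : ℕ) : ∀ x : ℕ → ℤ, invStat n x = linv ((List.range n).map x) := by
  induction n with
  | zero => intro x; simp [invStat, linv]
  | succ n ih =>
    intro x
    rw [map_range_succ, linv, ← ih, countP_map_range n (fun i => x (i + 1)) (fun b => b < x 0)]
    unfold invStat
    simp only [Finset.card_filter, Finset.sum_product]
    rw [Finset.sum_range_succ']
    rw [add_comm]
    congr 1
    · rw [Finset.sum_range_succ']
      simp
    · refine Finset.sum_congr rfl fun i _ => ?_
      rw [Finset.sum_range_succ']
      simp

lemma tr_spec : ∀ (m : ℕ) (x : ℕ → ℤ), 1 ≤ m →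
    1 ≤ tr ((List.range m).map x) ∧ tr ((List.range m).map x) ≤ m ∧
    (∀ i, i + 1 < tr ((List.range m).map x) → x (i + 1) < x i) ∧
    (tr ((List.range m).map x) = m ∨
      ¬ x (tr ((List.range m).map x)) < x (tr ((List.range m).map x) - 1))
  | 0, x, h => by omega
  | 1, x, h => by simp [tr]
  | m + 2, x, h => by
    obtain ⟨h1, h2, h3, h4⟩ := tr_spec (m + 1) (fun i => x (i + 1)) (by omega)
    rw [map_range_succ, map_range_succ] at *
    rw [tr]
    generalize tr (x (0 + 1) :: List.map (fun i => x (i + 1 + 1)) (List.range m)) = t at *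
    split_ifs with h
    · refine ⟨by omega, by omega, ?_, ?_⟩
      · intro i hi
        cases i with
        | zero => exact h
        | succ i => exact h3 i (by omega)
      · rcases h4 with h4 | h4
        · left; omega
        · right
          have : t - 1 + 1 = t := by omega
          rw [this] at h4
          simpa using h4
    · refine ⟨by omega, by omega, by intro i hi; omega, ?_⟩
      right; simpa using h

lemma tr_unique (m : ℕ) (x : ℕ → ℤ) (t s : ℕ) (ht : 1 ≤ t) (hs : s ≤ m)
    (h1 : ∀ i, i + 1 < s → x (i + 1) < x i) (h2 : t = m ∨ ¬ x t < x (t - 1)) : ¬ t < s := by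
  intro h
  rcases h2 with h2 | h2
  · omega
  · have := h1 (t - 1) (by omega)
    rw [show t - 1 + 1 = t by omega] at this
    exact h2 this

lemma isDesar_iff (m : ℕ) (x : ℕ → ℤ) (hx : ∀ i, i + 1 < m → x i ≠ x (i + 1)) :
    IsDesar m x ↔ Even (tr ((List.range m).map x)) := by
  rcases Nat.eq_zero_or_pos m with rfl | hm
  · simp [IsDesar, tr]
  obtain ⟨h1, h2, h3, h4⟩ := tr_spec m x hm
  generalize tr ((List.range m).map x) = t at *
  constructor
  · rintro (h | ⟨k, k1, k2, k3, k4⟩)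
    · omega
    have a1 := tr_unique m x t (2 * k) h1 k2 k3 h4
    have a2 := tr_unique m x (2 * k) t (by omega) h2 h3 (by
      rcases k4 with k4 | k4
      · exact Or.inl k4
      · exact Or.inr (by omega))
    exact ⟨k, by omega⟩
  · rintro ⟨k, hk⟩
    right
    refine ⟨k, by omega, by omega, fun i hi => h3 i (by omega), ?_⟩
    rw [show 2 * k = t by omega]
    rcases h4 with h4 | h4
    · exact Or.inl h4
    · by_cases htm : t = m
      · exact Or.inl htm
      right
      have := hx (t - 1) (by omega)
      rw [show t - 1 + 1 = t by omega] at this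
      omega

lemma drop_map_range (n m : ℕ) (h : m ≤ n) (x : ℕ → ℤ) :
    ((List.range n).map x).drop (n - m) = (List.range m).map (fun i => x (n - m + i)) := by
  apply List.ext_getElem
  · simp; omega
  · intro i h1 h2; simp

lemma take_map_range (n m : ℕ) (h : m ≤ n) (x : ℕ → ℤ) :
    ((List.range n).map x).take m = (List.range m).map x := by
  apply List.ext_getElem
  · simp; omega
  · intro i h1 h2; simp

lemma dlen_eq (n : ℕ) (x : ℕ → ℤ) (hx : ∀ i, i + 1 < n → x i ≠ x (i + 1)) :
    n - dlen n x = pix ((List.range n).map x) := by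
  set l := (List.range n).map x with hl
  have hlen : l.length = n := by simp [hl]
  have hple := pix_le l
  have hset : {m | m ≤ n ∧ IsDesar m (fun i => x (n - m + i))}
      = {m | m ≤ n ∧ Even (tr (l.drop (n - m)))} := by
    ext m
    simp only [Set.mem_ofPred_eq]
    apply and_congr_right
    intro hm
    rw [isDesar_iff, hl, drop_map_range n m hm x]
    intro i hi
    have := hx (n - m + i) (by omega)
    rwa [add_assoc] at this
  have : dlen n x = n - pix l := by
    unfold dlen
    rw [hset]
    apply IsGreatest.csSup_eq
    constructor
    · refine ⟨by omega, ?_⟩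
      rw [show n - (n - pix l) = pix l by omega]
      exact pix_even l
    · rintro m ⟨hm, he⟩
      by_contra hlt
      exact pix_min l (n - m) (by omega) he
  omega

lemma pix_card (n : ℕ) (x : ℕ → ℤ) (hx : ((List.range n).map x).Nodup) (p : ℤ → Prop) [DecidablePred p] :
    ((Finset.range (n - dlen n x)).filter (fun i => p (x i))).card
      = ((((List.range n).map x).take (pix ((List.range n).map x))).toFinset.filter p).card := by
  have hx' : ∀ i, i + 1 < n → x i ≠ x (i + 1) := by
    intro i hi h
    have hinj := List.inj_on_of_nodup_map hx
    have := hinj (x := i) (by simp; omega) (y := i + 1) (by simp; omega) h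
    omega
  rw [dlen_eq n x hx']
  have hple := pix_le ((List.range n).map x)
  simp only [List.length_map, List.length_range] at hple
  rw [take_map_range n _ hple]
  rw [← countP_map_range]
  apply countP_words
  rw [mem_words]
  refine ⟨?_, rfl⟩
  rw [← take_map_range n _ hple]
  exact hx.sublist (List.take_sublist _ _)

end Translate

/-! ### signs -/

section Signs
variable {K : Type*} [CommRing K] (q : K)

theorem signs_gen_sum : ∀ (n : ℕ) (g : ℕ → K),
    ∑ e : Fin n → Bool, q ^ (∑ v, if e v then (v : ℕ) + 1 else 0) * g (∑ v, if e v then 1 else 0)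
      = ∑ N ∈ range (n + 1), qb q n N * (q ^ Nat.choose (N + 1) 2 * g N)
  | 0, g => by simp [qb]
  | n + 1, g => by
    rw [← Equiv.sum_comp (Fin.snocEquiv (fun _ => Bool)), Fintype.sum_prod_type, Fintype.sum_bool]
    simp only [Fin.snocEquiv_apply, Fin.sum_univ_castSucc, Fin.snoc_castSucc, Fin.snoc_last,
      Fin.val_castSucc, Fin.val_last, if_true, Bool.false_eq_true, if_false, add_zero]
    have h1 := signs_gen_sum n g
    have h2 := signs_gen_sum n (fun j => q ^ (n + 1) * g (j + 1))
    have e : ∀ e : Fin n → Bool,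
        q ^ (∑ v, (if e v then (v : ℕ) + 1 else 0) + (n + 1)) * g (∑ v, (if e v then 1 else 0) + 1)
        = q ^ (∑ v, if e v then (v : ℕ) + 1 else 0)
          * (fun j => q ^ (n + 1) * g (j + 1)) (∑ v, if e v then 1 else 0) := by
      intro e; rw [pow_add]; ring
    rw [Finset.sum_congr rfl fun x _ => e x, h2, h1, sum_qb_succ, ← Finset.sum_add_distrib]
    refine Finset.sum_congr rfl fun N hN => ?_
    simp only [Finset.mem_range] at hN
    have e1 : Nat.choose (N + 1 + 1) 2 = (N + 1) + Nat.choose (N + 1) 2 := by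
      rw [Nat.choose_succ_succ' (N + 1) 1, Nat.choose_one_right]
    have e2 : q ^ (n - N) * q ^ (N + 1) = q ^ (n + 1) := by rw [← pow_add]; congr 1; omega
    rw [e1, pow_add q (N + 1), ← e2]; ring

def sg (n : ℕ) (e : Fin n → Bool) (v : Fin n) : ℤ :=
  if e v then -(((v : ℕ) : ℤ) + 1) else (((v : ℕ) : ℤ) + 1)

lemma sg_inj (n : ℕ) (e : Fin n → Bool) : Function.Injective (sg n e) := by
  intro a b h
  unfold sg at h
  ext
  split_ifs at h <;> omega

lemma sword_list (n : ℕ) (σ : Equiv.Perm (Fin n)) (e : Fin n → Bool) :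
    (List.range n).map (sword n (σ, fun i => e (σ i))) = List.ofFn (fun i => sg n e (σ i)) := by
  apply List.ext_getElem
  · simp
  · intro i h1 h2
    simp only [List.length_map, List.length_range] at h1
    simp [sword, sg, h1]

lemma sword_fin (n : ℕ) (σ : Equiv.Perm (Fin n)) (e : Fin n → Bool) (i : Fin n) :
    sword n (σ, fun i => e (σ i)) i = sg n e (σ i) := by
  simp [sword, sg]

lemma sg_neg (n : ℕ) (e : Fin n → Bool) (v : Fin n) : sg n e v < 0 ↔ e v = true := by
  unfold sg
  split_ifs with h
  · simp [h]; omega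
  · simp [h]; omega

lemma neg_sword (n : ℕ) (σ : Equiv.Perm (Fin n)) (e : Fin n → Bool) :
    negStat n (sword n (σ, fun i => e (σ i))) = ∑ v, if e v then 1 else 0 := by
  unfold negStat
  rw [Finset.card_filter, Finset.sum_range]
  simp only [sword_fin, sg_neg]
  exact Equiv.sum_comp σ (fun v => if e v then 1 else 0)

lemma len_sword (n : ℕ) (σ : Equiv.Perm (Fin n)) (e : Fin n → Bool) :
    lenStat n (sword n (σ, fun i => e (σ i)))
      = linv (List.ofFn (fun i => sg n e (σ i))) + ∑ v, if e v then (v : ℕ) + 1 else 0 := by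
  unfold lenStat
  rw [invStat_eq, sword_list, Finset.sum_range]
  congr 1
  simp only [sword_fin, sg_neg]
  rw [← Equiv.sum_comp σ (fun v => if e v then (v : ℕ) + 1 else 0)]
  refine Finset.sum_congr rfl fun i _ => ?_
  by_cases h : e (σ i) = true
  · simp only [h, if_true, sg]; omega
  · simp only [h, if_false]; simp

theorem lhs_eq (Y0 Y1 Z : K) (n : ℕ) :
    (∑ w : Equiv.Perm (Fin n) × (Fin n → Bool),
        q ^ lenStat n (sword n w) * Y0 ^ pixPlus n (sword n w)
          * Y1 ^ pixMinus n (sword n w) * Z ^ negStat n (sword n w))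
      = ∑ N ∈ range (n + 1), qb q n N * (q ^ Nat.choose (N + 1) 2 * (Z ^ N *
          ∑ j ∈ range (N + 1), ∑ i ∈ range (n - N + 1), qb q N j * qb q (n - N) i *
          (q ^ (i * (N - j)) * Y1 ^ j * Y0 ^ i * Dmaj q (n - j - i)))) := by
  rw [Fintype.sum_prod_type]
  have h1 : ∀ σ : Equiv.Perm (Fin n), ∑ ε : Fin n → Bool, 
        q ^ lenStat n (sword n (σ, ε)) * Y0 ^ pixPlus n (sword n (σ, ε))
          * Y1 ^ pixMinus n (sword n (σ, ε)) * Z ^ negStat n (sword n (σ, ε))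
      = ∑ e : Fin n → Bool, (fun l : List ℤ =>
          q ^ (∑ v, if e v then (v : ℕ) + 1 else 0) * Z ^ (∑ v, if e v then 1 else 0) *
          (q ^ linv l * Y0 ^ ((l.take (pix l)).toFinset.filter (fun a => 0 < a)).card
        * Y1 ^ ((l.take (pix l)).toFinset.filter (fun a => a < 0)).card))
          (List.ofFn (fun i => sg n e (σ i))) := by
    intro σ
    rw [← Equiv.sum_comp (σ.symm.arrowCongr (Equiv.refl Bool))]
    refine Finset.sum_congr rfl fun e _ => ?_
    have : (σ.symm.arrowCongr (Equiv.refl Bool)) e = fun i => e (σ i) := by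
      funext i; simp [Equiv.arrowCongr]
    rw [this, len_sword, neg_sword, pixPlus, pixMinus]
    have hn : ((List.range n).map (sword n (σ, fun i => e (σ i)))).Nodup := by
      rw [sword_list]; exact List.nodup_ofFn.2 ((sg_inj n e).comp σ.injective)
    have p1 := pix_card n _ hn (fun a => 0 < a)
    have p2 := pix_card n _ hn (fun a => a < 0)
    rw [sword_list] at p1 p2
    simp only
    rw [← p1, ← p2, pow_add]
    simp only [Finset.card_filter]
    ring
  rw [Finset.sum_congr rfl fun σ _ => h1 σ, Finset.sum_comm]
  refine Eq.trans ?_ (signs_gen_sum q n (fun N => Z ^ N *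
          ∑ j ∈ range (N + 1), ∑ i ∈ range (n - N + 1), qb q N j * qb q (n - N) i *
          (q ^ (i * (N - j)) * Y1 ^ j * Y0 ^ i * Dmaj q (n - j - i))))
  refine Finset.sum_congr rfl fun e _ => ?_
  refine (sum_transfer n (sg n e) (sg_inj n e) (fun l : List ℤ =>
          q ^ (∑ v, if e v then (v : ℕ) + 1 else 0) * Z ^ (∑ v, if e v then 1 else 0) *
          (q ^ linv l * Y0 ^ ((l.take (pix l)).toFinset.filter (fun a => 0 < a)).card
        * Y1 ^ ((l.take (pix l)).toFinset.filter (fun a => a < 0)).card))).trans ?_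
  rw [← Finset.mul_sum]
  let U : Finset ℤ := (Finset.univ.filter (fun v => e v = true)).image (sg n e)
  let V : Finset ℤ := (Finset.univ.filter (fun v => ¬ e v = true)).image (sg n e)
  have hUV : Finset.univ.image (sg n e) = U ∪ V := by
    rw [← Finset.image_union, Finset.filter_union_filter_not_eq]
  have hU : ∀ x ∈ U, x < 0 := by
    intro x hx
    obtain ⟨v, hv, rfl⟩ := Finset.mem_image.1 hx
    exact (sg_neg n e v).2 (Finset.mem_filter.1 hv).2
  have hV : ∀ x ∈ V, 0 < x := by
    intro x hx
    obtain ⟨v, hv, rfl⟩ := Finset.mem_image.1 hx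
    have := (Finset.mem_filter.1 hv).2
    unfold sg
    rw [if_neg this]; omega
  have cU : U.card = ∑ v, if e v then 1 else 0 := by
    rw [Finset.card_image_of_injective _ (sg_inj n e), Finset.card_filter]
  have cUV : U.card + V.card = n := by
    rw [Finset.card_image_of_injective _ (sg_inj n e), Finset.card_image_of_injective _ (sg_inj n e),
      Finset.card_filter_add_card_filter_not, Finset.card_univ, Fintype.card_fin]
  rw [hUV, pix_inner_sum q Y0 Y1 U V hU hV, cUV, ← cU, show V.card = n - U.card by omega]
  ring

end Signs

theorem rhs_eq {K : Type*} [Field K] (q Y0 Y1 Z : K) (n : ℕ)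
    (hq : ∀ m ≤ n, qq q m ≠ 0) :
    ∑ c ∈ Finset.Nat.antidiagonalTuple 4 n,
          (qq q n / (qq q (c 0) * qq q (c 1) * qq q (c 2) * qq q (c 3)))
            * q ^ Nat.choose (c 1 + c 2 + 1) 2
            * Y0 ^ c 0 * (Y1 * Z) ^ c 1 * (Z * q ^ c 0) ^ c 2 * Dmaj q (c 2 + c 3)
      = ∑ N ∈ range (n + 1), qb q n N * (q ^ Nat.choose (N + 1) 2 * (Z ^ N *
          ∑ j ∈ range (N + 1), ∑ i ∈ range (n - N + 1), qb q N j * qb q (n - N) i *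
          (q ^ (i * (N - j)) * Y1 ^ j * Y0 ^ i * Dmaj q (n - j - i)))) := by
  simp only [Finset.mul_sum]
  simp only [Finset.sum_sigma']
  symm
  refine Finset.sum_bij' (fun p _ => ![p.2.2, p.2.1, p.1 - p.2.1, n - p.1 - p.2.2])
    (fun c _ => ⟨c 1 + c 2, c 1, c 0⟩) ?_ ?_ ?_ ?_ ?_
  · rintro ⟨N, j, i⟩ h
    simp only [Finset.mem_sigma, Finset.mem_range] at h
    rw [Finset.Nat.mem_antidiagonalTuple]
    simp [Fin.sum_univ_four]
    omega
  · intro c hc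
    rw [Finset.Nat.mem_antidiagonalTuple, Fin.sum_univ_four] at hc
    simp only [Finset.mem_sigma, Finset.mem_range]
    omega
  · rintro ⟨N, j, i⟩ h
    simp only [Finset.mem_sigma, Finset.mem_range] at h
    simp
    omega
  · intro c hc
    rw [Finset.Nat.mem_antidiagonalTuple, Fin.sum_univ_four] at hc
    funext k
    fin_cases k
    · simp
    · simp
    · simp
    · simp; omega
  · rintro ⟨N, j, i⟩ h
    simp only [Finset.mem_sigma, Finset.mem_range] at h
    obtain ⟨k, rfl⟩ : ∃ k, N = j + k := ⟨N - j, by omega⟩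
    obtain ⟨l, rfl⟩ : ∃ l, n = j + k + i + l := ⟨n - (j + k + i), by omega⟩
    have e1 : j + k - j = k := by omega
    have e2 : j + k + i + l - (j + k) = i + l := by omega
    have e3 : j + k + i + l - (j + k) - i = l := by omega
    have e4 : j + k + i + l - j - i = k + l := by omega
    simp only [e1, e2, e4, Matrix.cons_val_zero, Matrix.cons_val_one, Matrix.cons_val]
    rw [show i + l - i = l by omega]
    have a1 := qb_qq q (j + k + i + l) (j + k) (i + l) (by omega)
    have a2 := qb_qq q (j + k) j k rfl
    have a3 := qb_qq q (i + l) i l rfl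
    have n1 := hq i (by omega)
    have n2 := hq j (by omega)
    have n3 := hq k (by omega)
    have n4 := hq l (by omega)
    have n5 : qq q (j + k + i + l) / (qq q i * qq q j * qq q k * qq q l)
        = qb q (j + k + i + l) (j + k) * qb q (j + k) j * qb q (i + l) i := by
      rw [div_eq_iff (by simp [n1, n2, n3, n4]), ← a1, ← a2, ← a3]; ring
    rw [n5]
    ring

theorem stmt7 (K : Type*) [Field K] (q Y0 Y1 Z : K) (n : ℕ)
    (hq : ∀ m ≤ n, qq q m ≠ 0) :
    (∑ w : Equiv.Perm (Fin n) × (Fin n → Bool),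
        q ^ lenStat n (sword n w) * Y0 ^ pixPlus n (sword n w)
          * Y1 ^ pixMinus n (sword n w) * Z ^ negStat n (sword n w))
      = ∑ c ∈ Finset.Nat.antidiagonalTuple 4 n,
          (qq q n / (qq q (c 0) * qq q (c 1) * qq q (c 2) * qq q (c 3)))
            * q ^ Nat.choose (c 1 + c 2 + 1) 2
            * Y0 ^ c 0 * (Y1 * Z) ^ c 1 * (Z * q ^ c 0) ^ c 2 * Dmaj q (c 2 + c 3) := by
  rw [lhs_eq, rhs_eq q Y0 Y1 Z n hq]
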